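/- Let a, b, θ be integers with 2 ≤ θ ≤ a−1 and a ≤ b, and let p ∈ [0,1]. Define x_0 = y_0 = s_0 = S_0 = p and, for t ≥ 1, x_t = φ_{a,p,θ}(y_{t−1}), y_t = φ_{b,p,θ}(x_{t−1}), s_t = φ_{a,p,θ}(s_{t−1}), and S_t = φ_{b,p,θ}(S_{t−1}). Then for every t ≥ 0 one has s_t ≤ x_t ≤ S_t and s_t ≤ y_t ≤ S_t; consequently the limits satisfy s_∞ ≤ x_∞ ≤ S_∞ and s_∞ ≤ y_∞ ≤ S_∞. -/

import Mathlib

/-- `φ_{n,p,θ}(x) = p + (1-p) * ∑_{k=θ}^{n} C(n,k) x^k (1-x)^{n-k}`. -/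
noncomputable def phiBP (n θ : ℕ) (p x : ℝ) : ℝ :=
  p + (1 - p) * ∑ k ∈ Finset.Icc θ n, (n.choose k : ℝ) * x ^ k * (1 - x) ^ (n - k)

/-- The pair `(x_t, y_t)` of the coupled iteration
`x_0 = y_0 = p`, `x_t = φ_{a,p,θ}(y_{t-1})`, `y_t = φ_{b,p,θ}(x_{t-1})`. -/
noncomputable def xyBP (a b θ : ℕ) (p : ℝ) : ℕ → ℝ × ℝ
  | 0 => (p, p)
  | t + 1 => (phiBP a θ p (xyBP a b θ p t).2, phiBP b θ p (xyBP a b θ p t).1)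

/-- `x_t`. -/
noncomputable def xBP (a b θ : ℕ) (p : ℝ) (t : ℕ) : ℝ := (xyBP a b θ p t).1

/-- `y_t`. -/
noncomputable def yBP (a b θ : ℕ) (p : ℝ) (t : ℕ) : ℝ := (xyBP a b θ p t).2

/-- The one-dimensional iteration `s_0 = p`, `s_t = φ_{n,p,θ}(s_{t-1})`. -/
noncomputable def sBP (n θ : ℕ) (p : ℝ) : ℕ → ℝ
  | 0 => p
  | t + 1 => phiBP n θ p (sBP n θ p t)

/-!
On the unit interval the binomial tail probability `P(Bin(n, x) ≥ θ)` increases both with the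
success probability `x` and with the number of trials `n`, so every `φ_{n,p,θ}` is monotone and
`φ_{a,p,θ} ≤ φ_{b,p,θ}`. The pairs `(x_t, y_t)` are the orbit of the monotone map
`F (x, y) = (φ_a y, φ_b x)` on the square. Since `(φ_a s, φ_a s) ≤ F (s, s)` and
`F (S, S) ≤ (φ_b S, φ_b S)`, the diagonal sequences `(s_t, s_t)` and `(S_t, S_t)` are a lower and
an upper barrier for that orbit.
-/

open Filter Finset Polynomial Topology

section MonotoneOn

variable {α : Type*} [Preorder α]

theorem seq_le_seq_of_monotoneOn {f : α → α} {s : Set α} {u v : ℕ → α} (hf : MonotoneOn f s)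
    (hus : ∀ n, u n ∈ s) (hvs : ∀ n, v n ∈ s) (h₀ : u 0 ≤ v 0)
    (hu : ∀ n, u (n + 1) ≤ f (u n)) (hv : ∀ n, f (v n) ≤ v (n + 1)) (n : ℕ) : u n ≤ v n := by
  induction n with
  | zero => exact h₀
  | succ n ih => exact (hu n).trans ((hf (hus n) (hvs n) ih).trans (hv n))

theorem monotoneOn_prodMap_swap {f g : α → α} {a b : α} (hf : MonotoneOn f (Set.Icc a b))
    (hg : MonotoneOn g (Set.Icc a b)) :
    MonotoneOn (fun z : α × α => Prod.map f g z.swap) (Set.Icc (a, a) (b, b)) :=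
  fun _ hz _ hw hzw =>
    ⟨hf ⟨hz.1.2, hz.2.2⟩ ⟨hw.1.2, hw.2.2⟩ hzw.2, hg ⟨hz.1.1, hz.2.1⟩ ⟨hw.1.1, hw.2.1⟩ hzw.1⟩

end MonotoneOn

section BinomialTail

variable {R : Type*} [CommRing R]

theorem eval_bernsteinPolynomial (n k : ℕ) (x : R) :
    (bernsteinPolynomial R n k).eval x = n.choose k * x ^ k * (1 - x) ^ (n - k) := by
  simp [bernsteinPolynomial]

theorem eval_bernsteinPolynomial_succ_succ (n k : ℕ) (x : R) :
    (bernsteinPolynomial R (n + 1) (k + 1)).eval x =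
      x * (bernsteinPolynomial R n k).eval x +
        (1 - x) * (bernsteinPolynomial R n (k + 1)).eval x := by
  simp only [eval_bernsteinPolynomial, Nat.choose_succ_succ', Nat.cast_add, Nat.add_sub_add_right]
  rcases lt_or_ge k n with hkn | hnk
  · have hpow : (1 - x) ^ (n - k) = (1 - x) * (1 - x) ^ (n - (k + 1)) := by
      rw [← pow_succ', ← Nat.sub_sub, Nat.sub_add_cancel (Nat.sub_pos_of_lt hkn)]
    rw [hpow]
    ring
  · rw [Nat.choose_eq_zero_of_lt (Nat.lt_succ_of_le hnk)]
    ring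

/-- The probability that a binomial random variable with `n` trials and success probability `x` is
at least `θ`, as a polynomial function on an arbitrary commutative ring. It is written with
Bernstein polynomials, whose values are the binomial probabilities. -/
noncomputable def binomialTail (n θ : ℕ) (x : R) : R :=
  ∑ k ∈ Icc θ n, (bernsteinPolynomial R n k).eval x

theorem binomialTail_zero_right (n : ℕ) (x : R) : binomialTail n 0 x = 1 := by
  rw [binomialTail, ← Nat.range_succ_eq_Icc_zero, ← eval_finsetSum, bernsteinPolynomial.sum,
    eval_one]

theorem binomialTail_of_lt {n θ : ℕ} (h : n < θ) (x : R) : binomialTail n θ x = 0 := by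
  rw [binomialTail, Icc_eq_empty_of_lt h, sum_empty]

theorem binomialTail_eq_add_binomialTail_succ (n θ : ℕ) (x : R) :
    binomialTail n θ x = (bernsteinPolynomial R n θ).eval x + binomialTail n (θ + 1) x := by
  rcases le_or_gt θ n with hθn | hnθ
  · rw [binomialTail, ← add_sum_Ioc_eq_sum_Icc hθn, ← Icc_add_one_left_eq_Ioc, binomialTail]
  · rw [binomialTail_of_lt hnθ, binomialTail_of_lt (hnθ.trans θ.lt_succ_self),
      bernsteinPolynomial.eq_zero_of_lt R hnθ, eval_zero, add_zero]

-- With `n + 1` trials, `θ + 1` successes are reached either within the first `n` trials, or by a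
-- success of the last trial after exactly `θ` successes.
theorem binomialTail_succ_succ (n θ : ℕ) (x : R) :
    binomialTail (n + 1) (θ + 1) x =
      binomialTail n (θ + 1) x + x * (bernsteinPolynomial R n θ).eval x := by
  induction θ with
  | zero =>
    have hn := binomialTail_eq_add_binomialTail_succ n 0 x
    have hn' := binomialTail_eq_add_binomialTail_succ (n + 1) 0 x
    simp only [binomialTail_zero_right, eval_bernsteinPolynomial, Nat.choose_zero_right,
      Nat.cast_one, pow_zero, one_mul, Nat.sub_zero] at hn hn' ⊢
    linear_combination hn - hn'
  | succ θ ih =>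
    linear_combination ih - binomialTail_eq_add_binomialTail_succ (n + 1) (θ + 1) x +
      binomialTail_eq_add_binomialTail_succ n (θ + 1) x -
      eval_bernsteinPolynomial_succ_succ n θ x

theorem binomialTail_succ_succ_eq_convex_combination (n θ : ℕ) (x : R) :
    binomialTail (n + 1) (θ + 1) x =
      x * binomialTail n θ x + (1 - x) * binomialTail n (θ + 1) x := by
  linear_combination binomialTail_succ_succ n θ x -
    x * binomialTail_eq_add_binomialTail_succ n θ x

variable [PartialOrder R] [IsOrderedRing R] {x : R}

theorem eval_bernsteinPolynomial_nonneg (n k : ℕ) (hx : x ∈ Set.Icc 0 1) :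
    0 ≤ (bernsteinPolynomial R n k).eval x := by
  rw [eval_bernsteinPolynomial]
  have := hx.1
  have := sub_nonneg.2 hx.2
  positivity

theorem binomialTail_antitone_right (n : ℕ) (hx : x ∈ Set.Icc 0 1) :
    Antitone fun θ => binomialTail n θ x :=
  antitone_nat_of_succ_le fun θ => by
    rw [binomialTail_eq_add_binomialTail_succ n θ]
    exact le_add_of_nonneg_left (eval_bernsteinPolynomial_nonneg n θ hx)

theorem binomialTail_mem_Icc (n θ : ℕ) (hx : x ∈ Set.Icc 0 1) :
    binomialTail n θ x ∈ Set.Icc 0 1 :=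
  ⟨sum_nonneg fun k _ => eval_bernsteinPolynomial_nonneg n k hx,
    (binomialTail_antitone_right n hx θ.zero_le).trans_eq (binomialTail_zero_right n x)⟩

theorem binomialTail_monotone_left (θ : ℕ) (hx : x ∈ Set.Icc 0 1) :
    Monotone fun n => binomialTail n θ x := by
  refine monotone_nat_of_le_succ fun n => ?_
  cases θ with
  | zero => simp only [binomialTail_zero_right, le_refl]
  | succ θ =>
    rw [binomialTail_succ_succ]
    exact le_add_of_nonneg_right (mul_nonneg hx.1 (eval_bernsteinPolynomial_nonneg n θ hx))

theorem binomialTail_monotoneOn (n θ : ℕ) :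
    MonotoneOn (binomialTail n θ : R → R) (Set.Icc 0 1) := by
  induction n generalizing θ with
  | zero =>
    cases θ with
    | zero => simp only [MonotoneOn, binomialTail_zero_right, le_refl, implies_true]
    | succ θ => simp only [MonotoneOn, binomialTail_of_lt θ.succ_pos, le_refl, implies_true]
  | succ n ih =>
    cases θ with
    | zero => simp only [MonotoneOn, binomialTail_zero_right, le_refl, implies_true]
    | succ θ =>
      intro x hx y hy hxy
      have hx₀ : 0 ≤ x := hx.1
      have hx₁ : 0 ≤ 1 - x := sub_nonneg.2 hx.2
      calc
        binomialTail (n + 1) (θ + 1) x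
          = x * binomialTail n θ x + (1 - x) * binomialTail n (θ + 1) x :=
            binomialTail_succ_succ_eq_convex_combination n θ x
        _ ≤ x * binomialTail n θ y + (1 - x) * binomialTail n (θ + 1) y := by
            gcongr
            exacts [ih θ hx hy hxy, ih (θ + 1) hx hy hxy]
        _ = binomialTail n (θ + 1) y + x * (bernsteinPolynomial R n θ).eval y := by
            rw [binomialTail_eq_add_binomialTail_succ n θ]
            ring
        _ ≤ binomialTail n (θ + 1) y + y * (bernsteinPolynomial R n θ).eval y := by
            gcongr
            exact eval_bernsteinPolynomial_nonneg n θ hy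
        _ = binomialTail (n + 1) (θ + 1) y := (binomialTail_succ_succ n θ y).symm

end BinomialTail

section BootstrapPercolation

variable {a b n θ : ℕ} {p x : ℝ}

theorem phiBP_eq_binomialTail (n θ : ℕ) (p x : ℝ) :
    phiBP n θ p x = p + (1 - p) * binomialTail n θ x := by
  simp only [phiBP, binomialTail, eval_bernsteinPolynomial]

theorem phiBP_mem_Icc (hp : p ∈ Set.Icc 0 1) (hx : x ∈ Set.Icc 0 1) :
    phiBP n θ p x ∈ Set.Icc 0 1 := by
  have htail := binomialTail_mem_Icc n θ hx
  have hconvex := convex_Icc (0 : ℝ) 1 ⟨zero_le_one, le_rfl⟩ htail hp.1 (sub_nonneg.2 hp.2)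
    (add_sub_cancel p 1)
  simpa only [phiBP_eq_binomialTail, smul_eq_mul, mul_one] using hconvex

theorem phiBP_monotoneOn (hp : p ≤ 1) : MonotoneOn (phiBP n θ p) (Set.Icc 0 1) := by
  intro x hx y hy hxy
  have : 0 ≤ 1 - p := sub_nonneg.2 hp
  simp only [phiBP_eq_binomialTail]
  gcongr
  exact binomialTail_monotoneOn n θ hx hy hxy

theorem phiBP_monotone_left (hp : p ≤ 1) (hx : x ∈ Set.Icc 0 1) :
    Monotone fun n => phiBP n θ p x := by
  intro m n hmn
  have : 0 ≤ 1 - p := sub_nonneg.2 hp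
  simp only [phiBP_eq_binomialTail]
  gcongr
  exact binomialTail_monotone_left θ hx hmn

theorem sBP_mem_Icc (hp : p ∈ Set.Icc 0 1) (t : ℕ) : sBP n θ p t ∈ Set.Icc 0 1 := by
  induction t with
  | zero => exact hp
  | succ t ih => exact phiBP_mem_Icc hp ih

theorem xyBP_mem_Icc (hp : p ∈ Set.Icc 0 1) (t : ℕ) :
    xyBP a b θ p t ∈ Set.Icc (0, 0) (1, 1) := by
  induction t with
  | zero => exact ⟨⟨hp.1, hp.1⟩, ⟨hp.2, hp.2⟩⟩
  | succ t ih =>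
    have hx := phiBP_mem_Icc (n := a) (θ := θ) hp ⟨ih.1.2, ih.2.2⟩
    have hy := phiBP_mem_Icc (n := b) (θ := θ) hp ⟨ih.1.1, ih.2.1⟩
    exact ⟨⟨hx.1, hy.1⟩, ⟨hx.2, hy.2⟩⟩

theorem diag_sBP_mem_Icc (hp : p ∈ Set.Icc 0 1) (t : ℕ) :
    (sBP n θ p t, sBP n θ p t) ∈ Set.Icc ((0, 0) : ℝ × ℝ) (1, 1) :=
  have hs := sBP_mem_Icc hp t
  ⟨⟨hs.1, hs.1⟩, ⟨hs.2, hs.2⟩⟩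

theorem diag_sBP_le_xyBP (hab : a ≤ b) (hp : p ∈ Set.Icc 0 1) (t : ℕ) :
    (sBP a θ p t, sBP a θ p t) ≤ xyBP a b θ p t :=
  seq_le_seq_of_monotoneOn (u := fun t => (sBP a θ p t, sBP a θ p t))
    (monotoneOn_prodMap_swap (phiBP_monotoneOn (n := a) hp.2) (phiBP_monotoneOn (n := b) hp.2))
    (diag_sBP_mem_Icc hp) (xyBP_mem_Icc hp) le_rfl
    (fun t => ⟨le_rfl, phiBP_monotone_left hp.2 (sBP_mem_Icc hp t) hab⟩) (fun _ => le_rfl) t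

theorem xyBP_le_diag_sBP (hab : a ≤ b) (hp : p ∈ Set.Icc 0 1) (t : ℕ) :
    xyBP a b θ p t ≤ (sBP b θ p t, sBP b θ p t) :=
  seq_le_seq_of_monotoneOn (v := fun t => (sBP b θ p t, sBP b θ p t))
    (monotoneOn_prodMap_swap (phiBP_monotoneOn (n := a) hp.2) (phiBP_monotoneOn (n := b) hp.2))
    (xyBP_mem_Icc hp) (diag_sBP_mem_Icc hp) le_rfl
    (fun _ => le_rfl) (fun t => ⟨phiBP_monotone_left hp.2 (sBP_mem_Icc hp t) hab, le_rfl⟩) t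

end BootstrapPercolation

theorem stmt_16_general (a b θ : ℕ) (hab : a ≤ b) (p : ℝ) (hp0 : 0 ≤ p) (hp1 : p ≤ 1) :
    (∀ t : ℕ,
      sBP a θ p t ≤ xBP a b θ p t ∧ xBP a b θ p t ≤ sBP b θ p t ∧
      sBP a θ p t ≤ yBP a b θ p t ∧ yBP a b θ p t ≤ sBP b θ p t) ∧
    ∀ sL xL yL SL : ℝ,
      Tendsto (sBP a θ p) atTop (𝓝 sL) →
      Tendsto (xBP a b θ p) atTop (𝓝 xL) →
      Tendsto (yBP a b θ p) atTop (𝓝 yL) →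
      Tendsto (sBP b θ p) atTop (𝓝 SL) →
      sL ≤ xL ∧ xL ≤ SL ∧ sL ≤ yL ∧ yL ≤ SL := by
  have lower := diag_sBP_le_xyBP (θ := θ) hab ⟨hp0, hp1⟩
  have upper := xyBP_le_diag_sBP (θ := θ) hab ⟨hp0, hp1⟩
  refine ⟨fun t => ⟨(lower t).1, (upper t).1, (lower t).2, (upper t).2⟩,
    fun sL xL yL SL hs hx hy hS => ⟨?_, ?_, ?_, ?_⟩⟩
  · exact le_of_tendsto_of_tendsto' hs hx fun t => (lower t).1
  · exact le_of_tendsto_of_tendsto' hx hS fun t => (upper t).1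
  · exact le_of_tendsto_of_tendsto' hs hy fun t => (lower t).2
  · exact le_of_tendsto_of_tendsto' hy hS fun t => (upper t).2

theorem stmt_16 (a b θ : ℕ) (hθ : 2 ≤ θ) (hθa : θ < a) (hab : a ≤ b)
    (p : ℝ) (hp0 : 0 ≤ p) (hp1 : p ≤ 1) :
    (∀ t : ℕ,
      sBP a θ p t ≤ xBP a b θ p t ∧ xBP a b θ p t ≤ sBP b θ p t ∧
      sBP a θ p t ≤ yBP a b θ p t ∧ yBP a b θ p t ≤ sBP b θ p t) ∧
    ∀ sL xL yL SL : ℝ,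
      Filter.Tendsto (sBP a θ p) Filter.atTop (nhds sL) →
      Filter.Tendsto (xBP a b θ p) Filter.atTop (nhds xL) →
      Filter.Tendsto (yBP a b θ p) Filter.atTop (nhds yL) →
      Filter.Tendsto (sBP b θ p) Filter.atTop (nhds SL) →
      sL ≤ xL ∧ xL ≤ SL ∧ sL ≤ yL ∧ yL ≤ SL :=
  stmt_16_general a b θ hab p hp0 hp1
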